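/- Let p ≥ 5 be a prime and let n > 0 be an integer with n ≢ 0 (mod p−1) and n ≢ −1 (mod p−1). Then there are at least p − n^* + 2 values of r ∈ {0,1,…,p−1} such that for every nonnegative integer m with m ≡ n (mod p(p−1)) and m ≠ n, the p-adic valuation of F_p(m,r) − F_p(n,r) equals the p-adic valuation of m − n. -/

import Mathlib

open Finset

/-- `C_p(n,r) = ∑_{0 ≤ k ≤ n, k ≡ r (mod p)} (-1)^k * binom(n,k)`. -/
def Cp (p n : ℕ) (r : ℤ) : ℚ :=
  ∑ k ∈ range (n+1), if ((k : ℤ) - r) % p = 0 then (-1 : ℚ)^k * (n.choose k) else 0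

/-- The Fleck quotient `F_p(n,r) = (-p)^{-⌊(n-1)/(p-1)⌋} C_p(n,r) + [n = 0]`. -/
noncomputable def Fp (p n : ℕ) (r : ℤ) : ℚ :=
  (-(p:ℚ)) ^ (-(Int.fdiv ((n:ℤ) - 1) ((p:ℤ) - 1))) * Cp p n r + (if n = 0 then 1 else 0)

/-- `n^*`: the unique integer in `{0,…,p-2}` with `n^* ≡ -n (mod p-1)`. -/
def nUp (p n : ℕ) : ℕ := ((-(n:ℤ)) % ((p:ℤ) - 1)).toNat

/-!
In the group ring `ℤ[ℤ/p]` with generator `T`, put `π = 1 - T`. The number `C_p(n,r)` is the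
coefficient of `T ^ r` in `π ^ n`. Expanding `(1 - π) ^ p = 1` gives `π ^ p = -p U π` for an
explicit polynomial `U = 1 + ⋯` in `π`, so for `n > 0` the Fleck quotient `F_p(n,r)` is the
coefficient of `T ^ r` in `π ^ (s + 1) U ^ q`, where `q` and `s` are the quotient and remainder of
`n - 1` by `p - 1`.

Replacing `n` by `n + p(p-1)k` multiplies this element by `(U ^ p) ^ k`. Since `T ^ p = 1`, the
`p`-th power of `U` is that of `T ^ ((p+1)/2) U`, which modulo `p` has no linear term in `π` and has
quadratic coefficient `-1/24`. Hence `U ^ p = 1 + p W` with `W ≡ π ^ 2 (c + ⋯) (mod p)` and `c` a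
unit mod `p`. By the binomial theorem, the required equality of valuations holds at each `r` for
which the coefficient of `T ^ r` in `π ^ (s + 1) U ^ q W` is nonzero mod `p`.

Modulo `p` that element is nonzero and divisible by `π ^ (s + 3)`, so it has at least `s + 4`
nonzero coefficients: over a field, each power of `π` dividing an element costs one more
support point, because `T ^ g ↦ (g - g₀) T ^ g` removes `g₀` from the support and lowers the
order of vanishing along the augmentation ideal by at most one.
-/

open scoped AddMonoidAlgebra

section FleckUnit

variable {R S : Type*} [CommRing R] [CommRing S] {p : ℕ}

/-- The polynomial `U(x) = ∑ k, (-x) ^ k * (p.choose (k + 1) / p)` with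
`(1 - x) ^ p = 1 - p * x * U(x) - x ^ p`. The quotient is natural number division, which is exact
for prime `p`. -/
def fleckUnit (p : ℕ) (x : R) : R :=
  ∑ k ∈ range (p - 1), (-x) ^ k * (p.choose (k + 1) / p : ℕ)

lemma map_fleckUnit (φ : R →+* S) (p : ℕ) (x : R) : φ (fleckUnit p x) = fleckUnit p (φ x) := by
  simp [fleckUnit]

lemma one_sub_pow_prime (hp : p.Prime) (hodd : Odd p) (x : R) :
    (1 - x) ^ p = 1 - p * x * fleckUnit p x - x ^ p := by
  have hsum : fleckUnit p x = ∑ k ∈ Ioo 0 p, (-x) ^ (k - 1) * (p.choose k / p : ℕ) := by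
    rw [show Ioo 0 p = Ico 1 p from rfl, sum_Ico_eq_sum_range]
    simp [fleckUnit, add_comm]
  have hbinom := add_pow_prime_eq hp (-x) 1
  simp only [one_pow, mul_one, hodd.neg_pow, ← hsum] at hbinom
  linear_combination hbinom

lemma choose_div_prime_mul_succ (hp : p.Prime) {k : ℕ} (hk : k + 1 < p) :
    p.choose (k + 1) / p * (k + 1) = (p - 1).choose k := by
  obtain ⟨c, hc⟩ := hp.dvd_choose_self k.succ_ne_zero hk
  have hsucc := Nat.add_one_mul_choose_eq (p - 1) k
  rw [Nat.sub_add_cancel hp.one_le, hc, mul_assoc] at hsucc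
  rw [hc, Nat.mul_div_cancel_left c hp.pos, ← Nat.eq_of_mul_eq_mul_left hp.pos hsucc]

lemma exists_fleckUnit_eq (hp : p.Prime) (hp5 : 5 ≤ p) (x : R) :
    ∃ V, fleckUnit p x =
      1 - (p.choose 2 / p : ℕ) * x + (p.choose 3 / p : ℕ) * x ^ 2 + x ^ 3 * V := by
  refine ⟨-∑ k ∈ range (p - 4), (-x) ^ k * (p.choose (k + 4) / p : ℕ), ?_⟩
  have hshift : ∑ k ∈ range (p - 4), (-x) ^ (k + 3) * (p.choose (k + 4) / p : ℕ) =
      -(x ^ 3 * ∑ k ∈ range (p - 4), (-x) ^ k * (p.choose (k + 4) / p : ℕ)) := by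
    rw [mul_sum, ← sum_neg_distrib]
    exact sum_congr rfl fun k _ => by ring
  rw [fleckUnit, show p - 1 = p - 4 + 3 by omega, sum_range_succ', sum_range_succ',
    sum_range_succ', hshift]
  simp [Nat.div_self hp.pos]
  ring

lemma dvd_fleckUnit_sub_one (hp : p.Prime) (hp5 : 5 ≤ p) (x : R) : x ∣ fleckUnit p x - 1 := by
  obtain ⟨V, hV⟩ := exists_fleckUnit_eq hp hp5 x
  exact ⟨-(p.choose 2 / p : ℕ) + (p.choose 3 / p : ℕ) * x + x ^ 2 * V, by rw [hV]; ring⟩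

lemma fleckUnit_zero (hp : p.Prime) (hp5 : 5 ≤ p) : fleckUnit p (0 : R) = 1 :=
  sub_eq_zero.1 (zero_dvd_iff.1 (dvd_fleckUnit_sub_one hp hp5 0))

lemma exists_one_sub_pow_eq (x : R) (n : ℕ) :
    ∃ V, (1 - x) ^ n = 1 - n * x + n.choose 2 * x ^ 2 + x ^ 3 * V := by
  induction n with
  | zero => exact ⟨0, by simp⟩
  | succ n ih =>
    obtain ⟨V, hV⟩ := ih
    refine ⟨V * (1 - x) - n.choose 2, ?_⟩
    rw [pow_succ, hV, Nat.choose_succ_succ' n 1, Nat.choose_one_right]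
    push_cast
    ring

/- The number is `-1/24` modulo `2 * l + 1`. -/
lemma not_dvd_choose_three_div_add {l : ℕ} (hp : (2 * l + 1).Prime) (hl : 2 ≤ l) :
    ¬ 2 * l + 1 ∣ (2 * l + 1).choose 3 / (2 * l + 1) + l * (l + 1) + (l + 1).choose 2 := by
  set c := (2 * l + 1).choose 3 / (2 * l + 1) + l * (l + 1) + (l + 1).choose 2 with hc
  have h₁ := choose_div_prime_mul_succ hp (k := 2) (by omega)
  have h₂ := Nat.add_one_mul_choose_eq (2 * l - 1) 1
  have h₃ := Nat.add_one_mul_choose_eq l 1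
  rw [Nat.sub_add_cancel (by omega)] at h₂
  simp only [Nat.add_sub_cancel, Nat.choose_one_right, Nat.reduceAdd] at h₁ h₂ h₃
  have hmul : 24 * c + 1 = (2 * l + 1) * (26 * l + 1) := by
    zify [show 1 ≤ 2 * l by omega] at hc h₁ h₂ h₃ ⊢
    linear_combination 24 * hc + 8 * h₁ - 4 * h₂ - 12 * h₃
  intro hdvd
  have hone : 2 * l + 1 ∣ 1 := (Nat.dvd_add_right (hdvd.mul_left 24)).1 ⟨_, hmul⟩
  exact hp.one_lt.ne' (Nat.dvd_one.1 hone)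

/- The exponent `l + 1` makes the coefficient of `x` equal to `-(l + 1) - l = -p`. -/
lemma exists_one_sub_pow_mul_fleckUnit_eq {l : ℕ} (hp : (2 * l + 1).Prime) (hl : 2 ≤ l) (x : R) :
    ∃ c : ℕ, ¬ 2 * l + 1 ∣ c ∧ ∃ A B : R, (1 - x) ^ (l + 1) * fleckUnit (2 * l + 1) x =
      1 + (x ^ 2 * (c + x * A) + (2 * l + 1 : ℕ) * B) := by
  obtain ⟨V, hV⟩ := exists_fleckUnit_eq hp (by omega) x
  obtain ⟨V', hV'⟩ := exists_one_sub_pow_eq x (l + 1)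
  have hchoose := choose_div_prime_mul_succ hp (k := 1) (by omega)
  have hl' : (2 * l + 1).choose 2 / (2 * l + 1) = l := by
    simp only [Nat.add_sub_cancel, Nat.choose_one_right, Nat.reduceAdd] at hchoose
    omega
  refine ⟨_, not_dvd_choose_three_div_add hp hl, ?_⟩
  rw [hV, hV', hl']
  set d := (2 * l + 1).choose 3 / (2 * l + 1)
  set e := (l + 1).choose 2
  refine ⟨-(l + 1) * d - e * l + e * d * x + V' * (1 - l * x + d * x ^ 2 + x ^ 3 * V) +
    V * (1 - (l + 1) * x + e * x ^ 2), -x, ?_⟩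
  push_cast
  ring

lemma pow_prime_eq_of_one_sub_pow_eq_one (hp : p.Prime) (hodd : Odd p) {x : R}
    (hx : (1 - x) ^ p = 1) : x ^ p = -p * fleckUnit p x * x := by
  linear_combination one_sub_pow_prime hp hodd x - hx

lemma sq_dvd_sq_mul_add_pow_prime (hp : p.Prime) {x : R} (hx : (p : R) ∣ x ^ p) (s b : R) :
    (p : R) ^ 2 ∣ (x ^ 2 * s + p * b) ^ p := by
  obtain ⟨r, hr⟩ := exists_add_pow_prime_eq hp (x ^ 2 * s) (p * b)
  have hxs : (p : R) ^ 2 ∣ (x ^ 2 * s) ^ p := by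
    rw [mul_pow, pow_right_comm]
    exact (pow_dvd_pow_of_dvd hx 2).mul_right _
  have hpb : (p : R) ^ 2 ∣ (p * b) ^ p := by
    rw [mul_pow]
    exact (pow_dvd_pow _ hp.two_le).mul_right _
  rw [hr]
  exact (hxs.add hpb).add ⟨x ^ 2 * s * b * r, by ring⟩

theorem exists_fleckUnit_pow_prime_eq (hp : p.Prime) (hp5 : 5 ≤ p) {x : R}
    (hx : (1 - x) ^ p = 1) :
    ∃ c : ℕ, ¬ p ∣ c ∧ ∃ A B : R,
      fleckUnit p x ^ p = 1 + p * (x ^ 2 * (c + x * A) + p * B) := by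
  have hodd : Odd p := hp.odd_of_ne_two (by omega)
  obtain ⟨l, hl⟩ := id hodd
  obtain ⟨c, hc, A, B, htwist⟩ := exists_one_sub_pow_mul_fleckUnit_eq (hl ▸ hp) (by omega) x
  rw [← hl] at hc htwist
  set s := (c : R) + x * A
  set y := x ^ 2 * s + p * B with hy
  have hU : fleckUnit p x ^ p = (1 + y) ^ p := by
    rw [← htwist, mul_pow, pow_right_comm, hx, one_pow, one_mul]
  have hxp : (p : R) ∣ x ^ p :=
    ⟨-fleckUnit p x * x, by rw [pow_prime_eq_of_one_sub_pow_eq_one hp hodd hx]; ring⟩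
  obtain ⟨B', hB'⟩ := sq_dvd_sq_mul_add_pow_prime hp hxp s B
  obtain ⟨g, hg⟩ := dvd_fleckUnit_sub_one hp hp5 (-y)
  have hbinom := one_sub_pow_prime hp hodd (-y)
  rw [sub_neg_eq_add, hodd.neg_pow] at hbinom
  refine ⟨c, hc, A - x * s ^ 2 * g, B - (2 * x ^ 2 * s * B + p * B ^ 2) * g + B', ?_⟩
  have hy2 : y ^ 2 = x ^ 4 * s ^ 2 + p * (2 * x ^ 2 * s * B + p * B ^ 2) := by rw [hy]; ring
  calc fleckUnit p x ^ p = 1 + p * (y - y ^ 2 * g) + y ^ p := by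
        rw [hU, hbinom]; linear_combination (p * y) * hg
    _ = _ := by rw [hy2, hB']; simp only [hy, s]; ring

/-- The power `x ^ n` divided by `(-p) ^ ((n - 1) / (p - 1))`, computed from the relation
`x ^ p = -p * fleckUnit p x * x` for `(1 - x) ^ p = 1`. Meaningful for `0 < n` only, as `n - 1` is
truncated subtraction. -/
def normalizedPow (p : ℕ) (x : R) (n : ℕ) : R :=
  x ^ ((n - 1) % (p - 1) + 1) * fleckUnit p x ^ ((n - 1) / (p - 1))

lemma pow_eq_neg_prime_pow_mul_normalizedPow (hp : p.Prime) (hodd : Odd p) {x : R}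
    (hx : (1 - x) ^ p = 1) {n : ℕ} (hn : 0 < n) :
    x ^ n = (-p) ^ ((n - 1) / (p - 1)) * normalizedPow p x n := by
  set q := (n - 1) / (p - 1) with hq
  set s := (n - 1) % (p - 1) with hs
  have hn' : n = s + (1 + (p - 1) * q) := by
    have hdiv : (p - 1) * q + s = n - 1 := Nat.div_add_mod (n - 1) (p - 1)
    omega
  have hsemi : SemiconjBy x (x ^ (p - 1)) (-p * fleckUnit p x) := by
    rw [SemiconjBy, mul_pow_sub_one hp.ne_zero, pow_prime_eq_of_one_sub_pow_eq_one hp hodd hx]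
  calc x ^ n = x ^ s * (x * (x ^ (p - 1)) ^ q) := by rw [hn', pow_add, pow_add, pow_one, pow_mul]
    _ = x ^ s * ((-p * fleckUnit p x) ^ q * x) := by rw [(hsemi.pow_right q).eq]
    _ = (-p) ^ q * normalizedPow p x n := by rw [normalizedPow, ← hq, ← hs]; ring

lemma normalizedPow_add_mul (hp : 1 < p) (x : R) {n : ℕ} (hn : 0 < n) (k : ℕ) :
    normalizedPow p x (n + p * (p - 1) * k) = normalizedPow p x n * (fleckUnit p x ^ p) ^ k := by
  have h : n + p * (p - 1) * k - 1 = n - 1 + (p - 1) * (p * k) := by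
    rw [Nat.sub_add_comm hn, mul_right_comm, mul_comm (p * k)]
  rw [normalizedPow, h, Nat.add_mul_mod_self_left, Nat.add_mul_div_left _ _ (by omega),
    pow_add _ _ (p * k), pow_mul _ p, ← mul_assoc, normalizedPow]

end FleckUnit

section PrimePower

variable {p : ℕ}

lemma exists_one_add_prime_mul_pow_eq {R : Type*} [CommRing R] (hp : p.Prime) (hp3 : 3 ≤ p)
    (w : R) (v k : ℕ) :
    ∃ y, (1 + p * w) ^ (p ^ v * k) = 1 + p ^ (v + 1) * (k * w + p * y) := by
  obtain ⟨y, hy⟩ := ZMod.exists_one_add_mul_pow_prime_pow_eq (u := (p : R)) hp dvd_rfl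
    ⟨p ^ (p - 3), by rw [← pow_two, ← pow_succ, ← pow_add]; congr; omega⟩ w v
  obtain ⟨z, hz⟩ := Polynomial.powAddExpansion 1 (p ^ v * p * (w + p * y)) k
  refine ⟨k * y + z * p ^ v * (w + p * y) ^ 2, ?_⟩
  rw [pow_mul, hy, hz]
  simp only [one_pow]
  ring

lemma padicValRat_pow_mul (hp : p.Prime) (v : ℕ) {z : ℤ} (hz : ¬ (p : ℤ) ∣ z) :
    padicValRat p (p ^ v * z) = v := by
  have := Fact.mk hp
  have hz0 : (z : ℚ) ≠ 0 := by rintro h; simp_all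
  rw [padicValRat.mul (by simp [hp.ne_zero]) hz0, padicValRat.pow, padicValRat.self hp.one_lt,
    padicValRat.of_int, padicValInt.eq_zero_of_not_dvd hz]
  simp

end PrimePower

section Augmentation

open AddMonoidAlgebra Bialgebra

variable {K G : Type*} [CommRing K]

lemma ofCoeff_smul_coeff_single (χ : G → K) (g : G) (c : K) :
    ofCoeff (χ • (single g c : K[G]).coeff) = single g (χ g * c) := by
  classical
  ext x
  by_cases h : g = x <;> simp [h]

variable [AddCommMonoid G]

/-- The derivation of the monoid algebra `K[G]` that multiplies the coefficient at `g` by `χ g`; for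
`K = ZMod p`, `G = ZMod p` and `χ = id` it is the Euler operator `T d/dT`. -/
noncomputable def weightDerivation (χ : G →+ K) : Derivation K K[G] K[G] :=
  Derivation.mk'
    { toFun f := ofCoeff (⇑χ • f.coeff)
      map_add' f f' := by rw [coeff_add, smul_add, ofCoeff_add]
      map_smul' c f := by ext; simp [mul_left_comm] } <| by
    intro f f'
    induction f using AddMonoidAlgebra.induction_linear with
    | zero => simp
    | add f₁ f₂ h₁ h₂ => rw [add_mul, map_add, h₁, h₂, map_add, add_smul, smul_add]; abel
    | single g c =>
      induction f' using AddMonoidAlgebra.induction_linear with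
      | zero => simp
      | add f₁ f₂ h₁ h₂ => rw [mul_add, map_add, h₁, h₂, map_add, add_smul, smul_add]; abel
      | single g' c' =>
        simp only [LinearMap.coe_mk, AddHom.coe_mk, ofCoeff_smul_coeff_single, single_mul_single,
          smul_eq_mul]
        rw [add_comm g' g, ← single_add, map_add]
        ring_nf

@[simp]
lemma coeff_weightDerivation_apply (χ : G →+ K) (f : K[G]) (g : G) :
    (weightDerivation χ f).coeff g = χ g * f.coeff g := rfl

lemma one_lt_card_support_of_counit_eq_zero {f : K[G]} (hf : f ≠ 0)
    (hε : counitAlgHom K K[G] f = 0) : 1 < #f.coeff.support := by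
  by_contra! hcard
  obtain ⟨g, hg⟩ := Finsupp.card_support_le_one.1 hcard
  have hsingle : f = single g (f.coeff g) := coeff_injective hg
  have hfg : f.coeff g = 0 := by
    rw [hsingle] at hε
    simpa using hε
  exact hf (by rw [hsingle, hfg, single_zero])

lemma pow_dvd_derivation_of_pow_succ_dvd {A : Type*} [CommRing A] [Algebra K A]
    (D : Derivation K A A) {a f : A} {i : ℕ} (h : a ^ (i + 1) ∣ f) : a ^ i ∣ D f := by
  obtain ⟨b, rfl⟩ := h
  rw [D.leibniz, D.leibniz_pow, Nat.add_sub_cancel]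
  exact ⟨a * D b + (i + 1) * b * D a, by simp only [smul_eq_mul, nsmul_eq_mul]; push_cast; ring⟩

theorem lt_card_support_of_pow_dvd [NoZeroDivisors K] {χ : G →+ K} (hχ : Function.Injective χ)
    {a : K[G]} (ha : counitAlgHom K K[G] a = 0) {i : ℕ} {f : K[G]} (hf : f ≠ 0)
    (hdvd : a ^ i ∣ f) : i < #f.coeff.support := by
  classical
  induction i generalizing f with
  | zero => simpa [card_pos, Finsupp.support_nonempty_iff] using hf
  | succ i ih =>
    have hcard : 1 < #f.coeff.support := one_lt_card_support_of_counit_eq_zero hf <|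
      zero_dvd_iff.1 <| ha ▸ map_dvd (counitAlgHom K K[G]) (dvd_of_mul_left_dvd hdvd)
    obtain ⟨g, hg⟩ := card_pos.1 (zero_lt_one.trans hcard)
    set f' := weightDerivation χ f - χ g • f with hf'
    have hsupp : f'.coeff.support = f.coeff.support.erase g := by
      ext g'
      simp [hf', ← sub_mul, sub_eq_zero, hχ.eq_iff]
    have hcard' : #f'.coeff.support = #f.coeff.support - 1 := by rw [hsupp, card_erase_of_mem hg]
    have hne : f' ≠ 0 := by
      rintro h
      simp only [h, coeff_zero, Finsupp.support_zero, card_empty] at hcard'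
      omega
    have hdvd' : a ^ i ∣ f' :=
      dvd_sub (pow_dvd_derivation_of_pow_succ_dvd _ hdvd)
        (Algebra.smul_def (χ g) f ▸ (dvd_of_mul_right_dvd hdvd).mul_left _)
    have := ih hne hdvd'
    omega

end Augmentation

section OneSubGen

open AddMonoidAlgebra Bialgebra

variable {p : ℕ} (R : Type*) [CommRing R]

/-- The element `π = 1 - T` of the group algebra of `ZMod p`, where `T = single 1 1` is the standard
generator of the group; its powers have the sums `C_p(n, r)` as coefficients. -/
noncomputable def oneSubGen (p : ℕ) : R[ZMod p] := 1 - single 1 1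

lemma one_sub_oneSubGen_pow : (1 - oneSubGen R p) ^ p = 1 := by
  rw [oneSubGen, sub_sub_cancel, single_pow, one_pow, nsmul_one, CharP.cast_eq_zero, one_def]

lemma counit_oneSubGen : counitAlgHom R R[ZMod p] (oneSubGen R p) = 0 := by
  simp [oneSubGen]

lemma coeff_oneSubGen_pow (n : ℕ) (x : ZMod p) :
    (oneSubGen R p ^ n).coeff x =
      ∑ k ∈ range (n + 1), if (k : ZMod p) = x then (-1) ^ k * (n.choose k : R) else 0 := by
  rw [oneSubGen, sub_eq_neg_add, add_pow, coeff_sum, Finsupp.finsetSum_apply]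
  refine sum_congr rfl fun k _ => ?_
  have h : (-single 1 1 : R[ZMod p]) ^ k * 1 ^ (n - k) * (n.choose k : R[ZMod p]) =
      single (k : ZMod p) ((-1) ^ k * (n.choose k : R)) := by
    rw [← single_neg, single_pow, one_pow, mul_one, natCast_def, single_mul_single, nsmul_one,
      add_zero]
  rw [h, coeff_single, Finsupp.single_apply]

variable [hp : Fact p.Prime]

lemma pow_prime_eq_algebraMap_counit (f : (ZMod p)[ZMod p]) :
    f ^ p = algebraMap (ZMod p) (ZMod p)[ZMod p] (counitAlgHom (ZMod p) (ZMod p)[ZMod p] f) := by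
  have : CharP (ZMod p)[ZMod p] p := charP_of_injective_algebraMap' (ZMod p) p
  induction f using AddMonoidAlgebra.induction_linear with
  | zero => simp [hp.out.ne_zero]
  | add f₁ f₂ h₁ h₂ => rw [add_pow_char, h₁, h₂, map_add, map_add]
  | single x c => simp [single_pow]

lemma oneSubGen_pow_ne_zero {i : ℕ} (hi : i < p) : oneSubGen (ZMod p) p ^ i ≠ 0 := by
  intro h
  have hcoeff := coeff_oneSubGen_pow (ZMod p) (p := p) i 0
  rw [h, sum_eq_single_of_mem 0 (by simp)] at hcoeff
  · simp at hcoeff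
  · intro k hk hk0
    rw [mem_range] at hk
    have : ¬ p ∣ k := Nat.not_dvd_of_pos_of_lt (Nat.pos_of_ne_zero hk0) (by omega)
    rw [if_neg (by rwa [ZMod.natCast_eq_zero_iff])]

lemma oneSubGen_pow_mul_ne_zero {i : ℕ} (hi : i < p) {h : (ZMod p)[ZMod p]}
    (hh : counitAlgHom (ZMod p) (ZMod p)[ZMod p] h ≠ 0) : oneSubGen (ZMod p) p ^ i * h ≠ 0 := by
  have hunit : IsUnit h := by
    rw [← isUnit_pow_iff hp.out.ne_zero, pow_prime_eq_algebraMap_counit]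
    exact (IsUnit.mk0 _ hh).map _
  rw [Ne, hunit.mul_left_eq_zero]
  exact oneSubGen_pow_ne_zero hi

end OneSubGen

section FleckQuotient

open AddMonoidAlgebra Bialgebra

variable {p : ℕ}

lemma Cp_eq_coeff (n : ℕ) (r : ℤ) : Cp p n r = (oneSubGen ℤ p ^ n).coeff (r : ZMod p) := by
  have hmod (k : ℕ) : ((k : ℤ) - r) % p = 0 ↔ (k : ZMod p) = r := by
    rw [← Int.dvd_iff_emod_eq_zero, ← ZMod.intCast_zmod_eq_zero_iff_dvd, Int.cast_sub, sub_eq_zero,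
      Int.cast_natCast]
  simp only [Cp, coeff_oneSubGen_pow, hmod]
  push_cast
  rfl

theorem Fp_eq_coeff_normalizedPow (hp : p.Prime) (hodd : Odd p) {n : ℕ} (hn : 0 < n) (r : ℤ) :
    Fp p n r = (normalizedPow p (oneSubGen ℤ p) n).coeff (r : ZMod p) := by
  have hfdiv : Int.fdiv ((n : ℤ) - 1) ((p : ℤ) - 1) = ((n - 1) / (p - 1) : ℕ) := by
    rw [Int.natCast_div, Nat.cast_pred hn, Nat.cast_pred hp.pos, Int.fdiv_eq_ediv_of_nonneg]
    exact sub_nonneg.2 (mod_cast hp.one_le)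
  have hpow : oneSubGen ℤ p ^ n = ((-p) ^ ((n - 1) / (p - 1)) : ℤ) •
      normalizedPow p (oneSubGen ℤ p) n := by
    rw [pow_eq_neg_prime_pow_mul_normalizedPow hp hodd (one_sub_oneSubGen_pow ℤ) hn, zsmul_eq_mul]
    push_cast
    rfl
  have hp0 : (-p : ℚ) ≠ 0 := by simpa using hp.ne_zero
  rw [Fp, hfdiv, if_neg hn.ne', add_zero, Cp_eq_coeff, hpow, coeff_smul_apply, smul_eq_mul,
    Int.cast_mul, zpow_neg, zpow_natCast]
  push_cast
  exact inv_mul_cancel_left₀ (pow_ne_zero _ hp0) _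

/-- Reduction of integral group ring elements modulo `p`; it turns divisibility of coefficients by
`p` into their vanishing. -/
noncomputable def reduction (p : ℕ) : ℤ[ZMod p] →+* (ZMod p)[ZMod p] :=
  mapRingHom (ZMod p) (Int.castRingHom (ZMod p))

lemma reduction_oneSubGen : reduction p (oneSubGen ℤ p) = oneSubGen (ZMod p) p := by
  simp [reduction, oneSubGen]

lemma coeff_reduction_eq_zero_iff {f : ℤ[ZMod p]} {x : ZMod p} :
    (reduction p f).coeff x = 0 ↔ (p : ℤ) ∣ f.coeff x := by
  rw [reduction, coeff_mapRingHom, Int.coe_castRingHom, ZMod.intCast_zmod_eq_zero_iff_dvd]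

lemma natCast_self_eq_zero : (p : (ZMod p)[ZMod p]) = 0 := by
  rw [natCast_def, CharP.cast_eq_zero, single_zero]

lemma exists_Fp_add_mul_sub_Fp_eq (hp : p.Prime) (hp3 : 3 ≤ p) {W : ℤ[ZMod p]}
    (hW : fleckUnit p (oneSubGen ℤ p) ^ p = 1 + p * W) {n : ℕ} (hn : 0 < n) (r : ℤ) (v k : ℕ) :
    ∃ y : ℤ, Fp p (n + p * (p - 1) * (p ^ v * k)) r - Fp p n r = p ^ (v + 1) *
      (k * (normalizedPow p (oneSubGen ℤ p) n * W).coeff (r : ZMod p) + p * y : ℤ) := by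
  have hodd : Odd p := hp.odd_of_ne_two (by omega)
  set N := normalizedPow p (oneSubGen ℤ p) n
  obtain ⟨y, hy⟩ := exists_one_add_prime_mul_pow_eq hp hp3 W v k
  have hN : normalizedPow p (oneSubGen ℤ p) (n + p * (p - 1) * (p ^ v * k)) =
      N + (p ^ (v + 1) : ℤ) • ((k : ℤ) • (N * W) + (p : ℤ) • (N * y)) := by
    rw [normalizedPow_add_mul hp.one_lt _ hn, hW, hy]
    simp only [zsmul_eq_mul]
    push_cast
    ring
  refine ⟨(N * y).coeff (r : ZMod p), ?_⟩
  rw [Fp_eq_coeff_normalizedPow hp hodd (by omega), Fp_eq_coeff_normalizedPow hp hodd hn, hN]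
  simp only [coeff_add, Finsupp.add_apply, coeff_smul_apply, smul_eq_mul]
  push_cast
  ring

theorem padicValRat_Fp_add_mul_sub_Fp (hp : p.Prime) (hp3 : 3 ≤ p) {W : ℤ[ZMod p]}
    (hW : fleckUnit p (oneSubGen ℤ p) ^ p = 1 + p * W) {n : ℕ} (hn : 0 < n) {r : ℤ}
    (hr : ¬ (p : ℤ) ∣ (normalizedPow p (oneSubGen ℤ p) n * W).coeff (r : ZMod p)) {k : ℕ}
    (hk : k ≠ 0) :
    padicValRat p (Fp p (n + p * (p - 1) * k) r - Fp p n r) =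
      padicValRat p ((n + p * (p - 1) * k : ℕ) - n : ℚ) := by
  have hpZ : Prime (p : ℤ) := Nat.prime_iff_prime_int.1 hp
  obtain ⟨v, k', hk', rfl⟩ := Nat.exists_eq_pow_mul_and_not_dvd hk p hp.ne_one
  obtain ⟨y, hFp⟩ := exists_Fp_add_mul_sub_Fp_eq hp hp3 hW hn r v k'
  have hmn : ((n + p * (p - 1) * (p ^ v * k') : ℕ) - n : ℚ) =
      p ^ (v + 1) * ((p - 1 : ℕ) * k' : ℤ) := by
    push_cast
    ring
  have hk'Z : ¬ (p : ℤ) ∣ k' := by rwa [Int.natCast_dvd_natCast]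
  rw [hFp, hmn, padicValRat_pow_mul hp, padicValRat_pow_mul hp]
  · rw [hpZ.dvd_mul, not_or, Int.natCast_dvd_natCast]
    exact ⟨Nat.not_dvd_of_pos_of_lt (by omega) (by omega), hk'Z⟩
  · rw [Int.dvd_add_left (dvd_mul_right _ _), hpZ.dvd_mul, not_or]
    exact ⟨hk'Z, hr⟩

lemma reduction_normalizedPow_add_mul (hp : p.Prime) {W : ℤ[ZMod p]}
    (hW : fleckUnit p (oneSubGen ℤ p) ^ p = 1 + p * W) {n : ℕ} (hn : 0 < n) (k : ℕ) :
    reduction p (normalizedPow p (oneSubGen ℤ p) (n + p * (p - 1) * k)) =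
      reduction p (normalizedPow p (oneSubGen ℤ p) n) := by
  rw [normalizedPow_add_mul hp.one_lt _ hn, hW, map_mul, map_pow, map_add, map_mul,
    map_natCast, natCast_self_eq_zero, zero_mul, add_zero, map_one, one_pow, mul_one]

theorem padicValRat_Fp_sub_Fp (hp : p.Prime) (hp3 : 3 ≤ p) {W : ℤ[ZMod p]}
    (hW : fleckUnit p (oneSubGen ℤ p) ^ p = 1 + p * W) {m n : ℕ} (hm : 0 < m) (hn : 0 < n)
    (hmod : m ≡ n [MOD p * (p - 1)]) (hne : m ≠ n) {r : ℤ}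
    (hr : (reduction p (normalizedPow p (oneSubGen ℤ p) n * W)).coeff (r : ZMod p) ≠ 0) :
    padicValRat p (Fp p m r - Fp p n r) = padicValRat p ((m : ℚ) - n) := by
  rcases le_total n m with h | h
  · obtain ⟨k, hk⟩ := (Nat.modEq_iff_dvd' h).1 hmod.symm
    obtain rfl : m = n + p * (p - 1) * k := by omega
    rw [Ne, coeff_reduction_eq_zero_iff] at hr
    exact padicValRat_Fp_add_mul_sub_Fp hp hp3 hW hn hr (by rintro rfl; simp at hne)
  · obtain ⟨k, hk⟩ := (Nat.modEq_iff_dvd' h).1 hmod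
    obtain rfl : n = m + p * (p - 1) * k := by omega
    rw [map_mul, reduction_normalizedPow_add_mul hp hW hm, ← map_mul, Ne,
      coeff_reduction_eq_zero_iff] at hr
    rw [← neg_sub (Fp _ _ _), padicValRat.neg, ← neg_sub ((_ : ℕ) : ℚ), padicValRat.neg]
    exact padicValRat_Fp_add_mul_sub_Fp hp hp3 hW hm hr (by rintro rfl; simp at hne)

lemma counit_fleckUnit_oneSubGen (hp : p.Prime) (hp5 : 5 ≤ p) (R : Type*) [CommRing R] :
    counitAlgHom R R[ZMod p] (fleckUnit p (oneSubGen R p)) = 1 := by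
  rw [← AlgHom.coe_toRingHom, map_fleckUnit, AlgHom.coe_toRingHom, counit_oneSubGen,
    fleckUnit_zero hp hp5]

lemma exists_fleckUnit_oneSubGen_pow_prime_eq (hp : p.Prime) (hp5 : 5 ≤ p) :
    ∃ W : ℤ[ZMod p], fleckUnit p (oneSubGen ℤ p) ^ p = 1 + p * W ∧
      ∃ h, counitAlgHom (ZMod p) (ZMod p)[ZMod p] h ≠ 0 ∧
        reduction p W = oneSubGen (ZMod p) p ^ 2 * h := by
  obtain ⟨c, hc, A, B, hU⟩ :=
    exists_fleckUnit_pow_prime_eq hp hp5 (one_sub_oneSubGen_pow (p := p) ℤ)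
  refine ⟨_, hU, c + oneSubGen (ZMod p) p * reduction p A, ?_, ?_⟩
  · rwa [map_add, map_mul, counit_oneSubGen, map_natCast, zero_mul, add_zero, Ne,
      ZMod.natCast_eq_zero_iff]
  · simp only [map_add, map_mul, map_pow, map_natCast, reduction_oneSubGen, natCast_self_eq_zero,
      zero_mul, add_zero]

theorem lt_card_support_reduction_normalizedPow_mul (hp : p.Prime) (hp5 : 5 ≤ p) {n : ℕ}
    (hn : (n - 1) % (p - 1) + 3 < p) {W : ℤ[ZMod p]} {h : (ZMod p)[ZMod p]}
    (hh : counitAlgHom (ZMod p) (ZMod p)[ZMod p] h ≠ 0)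
    (hW : reduction p W = oneSubGen (ZMod p) p ^ 2 * h) :
    (n - 1) % (p - 1) + 3 <
      #(reduction p (normalizedPow p (oneSubGen ℤ p) n * W)).coeff.support := by
  have := Fact.mk hp
  have hfactor : reduction p (normalizedPow p (oneSubGen ℤ p) n * W) =
      oneSubGen (ZMod p) p ^ ((n - 1) % (p - 1) + 3) *
        (fleckUnit p (oneSubGen (ZMod p) p) ^ ((n - 1) / (p - 1)) * h) := by
    simp only [normalizedPow, map_mul, map_pow, map_fleckUnit, reduction_oneSubGen, hW]
    ring
  rw [hfactor]
  refine lt_card_support_of_pow_dvd (χ := AddMonoidHom.id (ZMod p)) Function.injective_id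
    (counit_oneSubGen (ZMod p)) (oneSubGen_pow_mul_ne_zero hn ?_) (dvd_mul_right _ _)
  rwa [map_mul, map_pow, counit_fleckUnit_oneSubGen hp hp5, one_pow, one_mul]

end FleckQuotient

lemma nUp_eq {p n : ℕ} (hp : 1 < p) (hn : 0 < n) : nUp p n = p - 2 - (n - 1) % (p - 1) := by
  set s := (n - 1) % (p - 1)
  have hs : s < p - 1 := Nat.mod_lt _ (by omega)
  have hdiv : (p - 1) * ((n - 1) / (p - 1)) + s = n - 1 := Nat.div_add_mod _ _
  have hn' : -(n : ℤ) = (p - 2 - s : ℕ) + ((p : ℤ) - 1) * (-((n - 1) / (p - 1) : ℕ) - 1) := by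
    zify [show 1 ≤ p by omega, show 1 ≤ n by omega, show 2 ≤ p by omega,
      show s ≤ p - 2 by omega] at hdiv ⊢
    linear_combination hdiv
  rw [nUp, hn', Int.add_mul_emod_self_left, Int.emod_eq_of_lt (by omega) (by omega),
    Int.toNat_natCast]

lemma pred_mod_add_two_lt {d n : ℕ} (hd : 0 < d) (hn : 0 < n) (h₀ : ¬ d ∣ n) (h₁ : ¬ d ∣ n + 1) :
    (n - 1) % d + 2 < d := by
  have hlt := Nat.mod_lt (n - 1) hd
  have hdiv := Nat.div_add_mod (n - 1) d
  have hne₀ : (n - 1) % d + 1 ≠ d := fun h => h₀ ⟨(n - 1) / d + 1, by rw [mul_add]; omega⟩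
  have hne₁ : (n - 1) % d + 2 ≠ d := fun h => h₁ ⟨(n - 1) / d + 1, by rw [mul_add]; omega⟩
  omega

theorem stmt2 (p : ℕ) (hp : p.Prime) (hp5 : 5 ≤ p) (n : ℕ) (hn : 0 < n)
    (h1 : ¬ (((p:ℤ) - 1) ∣ (n:ℤ))) (h2 : ¬ (((p:ℤ) - 1) ∣ ((n:ℤ) + 1))) :
    ∃ S : Finset ℕ, S ⊆ Finset.range p ∧ p - nUp p n + 2 ≤ S.card ∧
      ∀ r ∈ S, ∀ m : ℕ, (m:ℤ) ≡ (n:ℤ) [ZMOD ((p:ℤ) * ((p:ℤ) - 1))] → m ≠ n →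
        padicValRat p (Fp p m (r:ℤ) - Fp p n (r:ℤ)) = padicValRat p ((m:ℚ) - (n:ℚ)) := by
  have := Fact.mk hp
  rw [← Nat.cast_pred hp.pos] at h1 h2 ⊢
  norm_cast at h1 h2
  have hs : (n - 1) % (p - 1) + 2 < p - 1 := pred_mod_add_two_lt (by omega) hn h1 h2
  obtain ⟨W, hU, h, hh, hW⟩ := exists_fleckUnit_oneSubGen_pow_prime_eq hp hp5
  have hcard := lt_card_support_reduction_normalizedPow_mul hp hp5 (n := n) (by omega) hh hW
  set f := reduction p (normalizedPow p (oneSubGen ℤ p) n * W) with hf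
  refine ⟨image ZMod.val f.coeff.support, ?_, ?_, ?_⟩
  · exact image_subset_iff.2 fun x _ => mem_range.2 x.val_lt
  · rw [card_image_of_injective _ (ZMod.val_injective p), nUp_eq hp.one_lt hn]
    omega
  · rintro _ hr m hmod hne
    obtain ⟨x, hx, rfl⟩ := mem_image.1 hr
    have hmod' : m ≡ n [MOD p * (p - 1)] := by rw [← Int.natCast_modEq_iff]; exact_mod_cast hmod
    have hm : 0 < m := by
      rw [Nat.pos_iff_ne_zero]
      rintro rfl
      exact h1 ((hmod'.dvd_iff (dvd_mul_left _ _)).1 (dvd_zero _))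
    exact padicValRat_Fp_sub_Fp hp (by omega) hU hm hn hmod' hne (by simpa [hf] using hx)
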